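/- For every s > 0 and λ ≥ 0, ∫₀^∞ J₀(√(y² + 2λy)) e^{−sy} dy = e^{−λ(√(s²+1) − s)} / √(s²+1), where J₀ is the Bessel function of the first kind of order zero. -/

import Mathlib

/-- Bessel function of the first kind of order zero, via its power series. -/
noncomputable def J0 (z : ℝ) : ℝ :=
  ∑' k : ℕ, (-1) ^ k * (z / 2) ^ (2 * k) / ((Nat.factorial k : ℝ)) ^ 2

/-!
Let `C(w) = ∑ wᵏ / (k!)²`, so that `J₀(z) = C(-z² / 4)`. Averaging `exp (b / z) * exp (a * z)` over
a circle around `0` pairs equal Taylor coefficients and yields `C(a * b)`. With `a = l + y / 2` and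
`b = -y / 2` this represents `J₀(√(y² + 2ly))` as the average of
`exp (l * z) * exp (y * (z - z⁻¹) / 2)` over the unit circle, which is elementary in `y`.
By Fubini, the Laplace transform is the average of `exp (l * z) / (s - (z - z⁻¹) / 2)`. The
denominator has the zeros `s ± r` with `r² = s² + 1`, of which only `s - r` lies in the unit disc,
and Cauchy's formula at this point gives `exp (l * (s - r)) / r`.
-/

open Complex MeasureTheory Metric Set
open Real (circleAverage)
open scoped Nat

section CircleAverage

variable {E : Type*} [NormedAddCommGroup E] {c : ℂ} {R : ℝ}

theorem circleAverage_integral_comm_of_norm_le [NormedSpace ℝ E] {α : Type*} [MeasurableSpace α]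
    {μ : Measure α} [SFinite μ] {F : ℂ → α → E} {bound : α → ℝ}
    (hF : StronglyMeasurable (Function.uncurry F)) (h_bound : Integrable bound μ)
    (hF_le : ∀ z ∈ sphere c |R|, ∀ a, ‖F z a‖ ≤ bound a) :
    circleAverage (fun z ↦ ∫ a, F z a ∂μ) c R = ∫ a, circleAverage (fun z ↦ F z a) c R ∂μ := by
  have h_integrable : Integrable (Function.uncurry fun θ a ↦ F (circleMap c R θ) a)
      ((volume.restrict (uIoc 0 (2 * Real.pi))).prod μ) := by
    rw [uIoc_of_le Real.two_pi_pos.le]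
    refine (h_bound.comp_snd _).mono' ?_ (.of_forall fun p ↦ hF_le _ (circleMap_mem_sphere' ..) _)
    exact (hF.comp_measurable (g := fun p : ℝ × α ↦ (circleMap c R p.1, p.2))
      (by fun_prop)).aestronglyMeasurable
  simp only [Real.circleAverage_def]
  rw [intervalIntegral_integral_swap h_integrable, integral_smul]

theorem hasSum_circleAverage_of_norm_le [NormedSpace ℝ E] {ι : Type*} [Countable ι]
    {F : ι → ℂ → E} {g : ℂ → E} {bound : ι → ℝ} (hF : ∀ n, CircleIntegrable (F n) c R)
    (h_bound : Summable bound)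
    (hF_le : ∀ n, ∀ z ∈ sphere c |R|, ‖F n z‖ ≤ bound n)
    (hg : ∀ z ∈ sphere c |R|, HasSum (fun n ↦ F n z) (g z)) :
    HasSum (fun n ↦ circleAverage (F n) c R) (circleAverage g c R) := by
  refine HasSum.const_smul _ (intervalIntegral.hasSum_integral_of_dominated_convergence
    (fun n _ ↦ bound n) ?_ ?_ ?_ ?_ ?_)
  · exact fun n ↦ (intervalIntegrable_iff.1 (hF n)).aestronglyMeasurable
  · exact fun n ↦ .of_forall fun θ _ ↦ hF_le n _ (circleMap_mem_sphere' c R θ)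
  · exact .of_forall fun _ _ ↦ h_bound
  · exact intervalIntegrable_const
  · exact .of_forall fun θ _ ↦ hg _ (circleMap_mem_sphere' c R θ)

variable [NormedSpace ℂ E] [CompleteSpace E] {f : ℂ → E}

theorem circleAverage_inv_pow_smul (hR : 0 < R) (hf : DiffContOnCl ℂ f (ball c R)) (n : ℕ) :
    circleAverage (fun z ↦ ((z - c) ^ n)⁻¹ • f z) c R = (n ! : ℂ)⁻¹ • iteratedDeriv n f c := by
  have h_cauchy := hf.circleIntegral_one_div_sub_center_pow_smul hR n
  rw [Real.circleAverage_eq_circleIntegral hR.ne']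
  simp only [smul_smul, ← mul_inv, ← pow_succ', ← one_div ((_ : ℂ) ^ (n + 1)), h_cauchy]
  congr 1
  field_simp [two_pi_I_ne_zero]

theorem hasSum_circleAverage_smul (hR : 0 < R) (hf : DiffContOnCl ℂ f (ball c R))
    {b : ℕ → ℂ} {g : ℂ → ℂ} (hb : Summable fun n ↦ ‖b n‖ / R ^ n)
    (hg : ∀ z ∈ sphere c R, HasSum (fun n ↦ b n / (z - c) ^ n) (g z)) :
    HasSum (fun n ↦ (b n / n !) • iteratedDeriv n f c) (circleAverage (fun z ↦ g z • f z) c R) := by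
  rw [← abs_of_pos hR] at hg
  have hf_cont : ContinuousOn f (sphere c |R|) := by
    refine hf.continuousOn.mono ?_
    rw [closure_ball c hR.ne', abs_of_pos hR]
    exact sphere_subset_closedBall
  have h_norm {z : ℂ} (hz : z ∈ sphere c |R|) : ‖z - c‖ = R := by
    rwa [mem_sphere_iff_norm, abs_of_pos hR] at hz
  obtain ⟨M, hM⟩ := (isCompact_sphere c |R|).exists_bound_of_continuousOn hf_cont
  have h_sum := hasSum_circleAverage_of_norm_le (F := fun n z ↦ (b n / (z - c) ^ n) • f z)
    (bound := fun n ↦ ‖b n‖ / R ^ n * M) ?_ (hb.mul_right M) ?_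
    fun z hz ↦ (hg z hz).smul_const (f z)
  · refine h_sum.congr_fun fun n ↦ ?_
    simp only [div_eq_mul_inv, mul_smul]
    rw [Real.circleAverage_fun_smul, circleAverage_inv_pow_smul hR hf]
  · intro n
    refine ContinuousOn.circleIntegrable' (ContinuousOn.smul (fun z hz ↦ ?_) hf_cont)
    have : (z - c) ^ n ≠ 0 := pow_ne_zero n (norm_pos_iff.1 (by rwa [h_norm hz]))
    exact ContinuousAt.continuousWithinAt (by fun_prop (disch := assumption))
  · intro n z hz
    rw [norm_smul, norm_div, norm_pow, h_norm hz]
    gcongr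
    exact hM z hz

end CircleAverage

/-- The Bessel–Clifford function of order zero, an entire function with `J₀(z) = C(-z² / 4)`:
it avoids the square root in the argument of `J₀`. -/
noncomputable def besselClifford (w : ℂ) : ℂ :=
  ∑' k : ℕ, w ^ k / (k ! : ℂ) ^ 2

theorem ofReal_J0 (x : ℝ) : (J0 x : ℂ) = besselClifford (-(x / 2) ^ 2) := by
  rw [J0, besselClifford, ofReal_tsum]
  congr 1 with k
  push_cast
  rw [neg_pow ((x / 2 : ℂ) ^ 2), pow_mul]

theorem ofReal_J0_sqrt {x : ℝ} (hx : 0 ≤ x) : (J0 √x : ℂ) = besselClifford (-x / 4) := by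
  rw [ofReal_J0, div_pow, ← ofReal_pow, Real.sq_sqrt hx]
  norm_num [neg_div]

theorem circleAverage_exp_div_mul_exp {R : ℝ} (hR : 0 < R) (a b : ℂ) :
    circleAverage (fun z ↦ cexp (b / z) * cexp (a * z)) 0 R = besselClifford (a * b) := by
  have h_diff : DiffContOnCl ℂ (fun z ↦ cexp (a * z)) (ball 0 R) :=
    Differentiable.diffContOnCl (by fun_prop)
  have h_summable : Summable fun n : ℕ ↦ ‖b ^ n / (n ! : ℂ)‖ / R ^ n := by
    refine (Real.summable_pow_div_factorial (‖b‖ / R)).congr fun n ↦ ?_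
    simp only [norm_div, norm_pow, norm_natCast]
    ring
  have h_exp (z : ℂ) : HasSum (fun n : ℕ ↦ b ^ n / n ! / (z - 0) ^ n) (cexp (b / z)) := by
    rw [exp_eq_exp_ℂ]
    refine (NormedSpace.expSeries_div_hasSum_exp (b / z)).congr_fun fun n ↦ ?_
    ring
  have h_sum := hasSum_circleAverage_smul hR h_diff h_summable fun z _ ↦ h_exp z
  simp only [smul_eq_mul, iteratedDeriv_cexp_const_mul] at h_sum
  rw [← h_sum.tsum_eq, besselClifford]
  congr 1 with n
  rw [mul_zero, Complex.exp_zero]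
  ring

theorem circleAverage_exp_mul_exp_sub_inv (l y : ℂ) :
    circleAverage (fun z ↦ cexp (l * z) * cexp (y * ((z - z⁻¹) / 2))) 0 1 =
      besselClifford (-(y ^ 2 + 2 * l * y) / 4) := by
  have h_split (z : ℂ) : cexp (l * z) * cexp (y * ((z - z⁻¹) / 2)) =
      cexp (-(y / 2) / z) * cexp ((l + y / 2) * z) := by
    rw [← Complex.exp_add, ← Complex.exp_add]
    ring_nf
  simp only [h_split, circleAverage_exp_div_mul_exp one_pos]
  ring_nf

section Roots

variable {r s : ℂ}

theorem norm_sub_lt_norm_add_of_im_sq_eq (hs : 0 < s.re) (hr : 0 < r.re)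
    (h : (r ^ 2).im = (s ^ 2).im) : ‖s - r‖ < ‖s + r‖ := by
  have h_im : r.re * r.im = s.re * s.im := by
    simp only [pow_two, mul_im] at h
    linarith
  have h_im_nonneg : 0 ≤ s.im * r.im := by
    refine nonneg_of_mul_nonneg_right (b := s.im * r.im) (a := s.re * r.re) ?_ (by positivity)
    calc 0 ≤ (s.re * s.im) ^ 2 := sq_nonneg _
      _ = s.re * r.re * (s.im * r.im) := by linear_combination -(s.re * s.im) * h_im
  have h_re_pos := mul_pos hs hr
  rw [← sq_lt_sq₀ (norm_nonneg _) (norm_nonneg _), ← normSq_eq_norm_sq, ← normSq_eq_norm_sq,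
    normSq_apply, normSq_apply]
  simp only [sub_re, sub_im, add_re, add_im]
  linarith

theorem norm_sub_lt_one_and_one_lt_norm_add (hs : 0 < s.re) (hr : 0 < r.re)
    (h : r ^ 2 = s ^ 2 + 1) : ‖s - r‖ < 1 ∧ 1 < ‖s + r‖ := by
  have h_prod : ‖s - r‖ * ‖s + r‖ = 1 := by
    rw [← norm_mul, show (s - r) * (s + r) = -1 by linear_combination -h, norm_neg, norm_one]
  have h_lt : ‖s - r‖ < ‖s + r‖ := norm_sub_lt_norm_add_of_im_sq_eq hs hr (by simp [h])
  constructor <;> nlinarith [norm_nonneg (s - r), norm_nonneg (s + r)]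

theorem sub_half_sub_inv_eq_mul_div {z : ℂ} (hz : z ≠ 0) (h : r ^ 2 = s ^ 2 + 1) :
    s - (z - z⁻¹) / 2 = (z - (s - r)) * (s + r - z) / (2 * z) := by
  field_simp
  linear_combination -h

theorem circleAverage_exp_div_sub_half_sub_inv (l : ℂ) (hs : 0 < s.re) (hr : 0 < r.re)
    (h : r ^ 2 = s ^ 2 + 1) :
    circleAverage (fun z ↦ cexp (l * z) / (s - (z - z⁻¹) / 2)) 0 1 =
      cexp (-l * (r - s)) / r := by
  obtain ⟨h_inside, h_outside⟩ := norm_sub_lt_one_and_one_lt_norm_add hs hr h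
  have h_ne (z : ℂ) (hz : ‖z‖ ≤ 1) : s + r - z ≠ 0 := by
    intro h_eq
    rw [sub_eq_zero.1 h_eq] at h_outside
    linarith
  have h_diff : DiffContOnCl ℂ (fun z ↦ 2 * cexp (l * z) / (s + r - z)) (ball 0 |1|) := by
    refine DifferentiableOn.diffContOnCl fun z hz ↦ ?_
    rw [abs_one, closure_ball _ one_ne_zero, mem_closedBall_zero_iff] at hz
    have := h_ne z hz
    exact DifferentiableAt.differentiableWithinAt (by fun_prop (disch := assumption))
  have h_factor : ∀ z ∈ sphere (0 : ℂ) |1|, cexp (l * z) / (s - (z - z⁻¹) / 2) =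
      ((z - 0) / (z - (s - r))) • (2 * cexp (l * z) / (s + r - z)) := by
    intro z hz
    rw [abs_one, mem_sphere_zero_iff_norm] at hz
    have hz_ne : z ≠ 0 := by rintro rfl; simp at hz
    rw [sub_half_sub_inv_eq_mul_div hz_ne h, smul_eq_mul, sub_zero, div_div_eq_mul_div,
      div_mul_div_comm]
    ring
  rw [Real.circleAverage_congr_sphere h_factor, h_diff.circleAverage_smul_div (by simpa),
    show s + r - (s - r) = 2 * r by ring, mul_div_mul_left _ _ two_ne_zero]
  ring_nf

end Roots

theorem re_sub_inv_of_norm_eq_one {z : ℂ} (hz : ‖z‖ = 1) : (z - z⁻¹).re = 0 := by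
  simp [Complex.inv_eq_conj hz]

theorem integral_exp_sub_mul_Ioi_zero {a s : ℂ} (h : a.re < s.re) :
    ∫ y : ℝ in Ioi 0, cexp ((a - s) * y) = (s - a)⁻¹ := by
  rw [integral_exp_mul_complex_Ioi (by simpa using h), ofReal_zero, mul_zero, Complex.exp_zero,
    neg_div, ← div_neg, neg_sub, one_div]

theorem integral_circleAverage_exp_mul_exp (l : ℂ) {s : ℂ} (hs : 0 < s.re) :
    ∫ y : ℝ in Ioi 0, circleAverage (fun z ↦ cexp (l * z) * cexp (((z - z⁻¹) / 2 - s) * y)) 0 1 =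
      circleAverage (fun z ↦ cexp (l * z) / (s - (z - z⁻¹) / 2)) 0 1 := by
  have h_re {z : ℂ} (hz : z ∈ sphere (0 : ℂ) |1|) : ((z - z⁻¹) / 2).re = 0 := by
    rw [abs_one, mem_sphere_zero_iff_norm] at hz
    rw [div_ofNat_re, re_sub_inv_of_norm_eq_one hz, zero_div]
  rw [← circleAverage_integral_comm_of_norm_le
    (bound := fun y ↦ Real.exp ‖l‖ * Real.exp (-s.re * y))]
  · refine Real.circleAverage_congr_sphere fun z hz ↦ ?_
    rw [integral_const_mul, integral_exp_sub_mul_Ioi_zero (by rwa [h_re hz]), ← div_eq_mul_inv]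
  · exact Measurable.stronglyMeasurable (by fun_prop)
  · exact (integrableOn_exp_mul_Ioi (neg_neg_of_pos hs) 0).const_mul _
  · intro z hz y
    rw [norm_mul]
    gcongr
    · refine (norm_exp_le_exp_norm _).trans_eq ?_
      rw [norm_mul, mem_sphere_zero_iff_norm.1 hz, abs_one, mul_one]
    · rw [norm_exp, re_mul_ofReal, sub_re, h_re hz, zero_sub]

theorem laplace_transform_identity_general {l r s : ℂ} (hs : 0 < s.re) (hr : 0 < r.re)
    (h : r ^ 2 = s ^ 2 + 1) :
    ∫ y : ℝ in Ioi 0, besselClifford (-(y ^ 2 + 2 * l * y) / 4) * cexp (-s * y) =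
      cexp (-l * (r - s)) / r := by
  have h_average (y : ℝ) : besselClifford (-(y ^ 2 + 2 * l * y) / 4) * cexp (-s * y) =
      circleAverage (fun z ↦ cexp (l * z) * cexp (((z - z⁻¹) / 2 - s) * y)) 0 1 := by
    rw [← circleAverage_exp_mul_exp_sub_inv, mul_comm, ← smul_eq_mul, ← Real.circleAverage_fun_smul]
    congr 1 with z
    rw [smul_eq_mul, mul_left_comm, ← Complex.exp_add]
    ring_nf
  simp only [h_average]
  rw [integral_circleAverage_exp_mul_exp l hs, circleAverage_exp_div_sub_half_sub_inv l hs hr h]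

theorem ofReal_integral_J0_sqrt_mul_exp (s : ℝ) {l : ℝ} (hl : 0 ≤ l) :
    ((∫ y in Ioi (0 : ℝ), J0 √(y ^ 2 + 2 * l * y) * Real.exp (-s * y) : ℝ) : ℂ) =
      ∫ y : ℝ in Ioi 0, besselClifford (-(y ^ 2 + 2 * l * y) / 4) * cexp (-s * y) := by
  rw [← integral_complex_ofReal]
  refine setIntegral_congr_fun measurableSet_Ioi fun y (hy : 0 < y) ↦ ?_
  simp [ofReal_J0_sqrt (show 0 ≤ y ^ 2 + 2 * l * y by positivity)]

theorem laplace_transform_identity :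
    ∀ s : ℝ, 0 < s → ∀ l : ℝ, 0 ≤ l →
      ∫ y in Set.Ioi (0 : ℝ), J0 (Real.sqrt (y ^ 2 + 2 * l * y)) * Real.exp (-s * y)
        = Real.exp (-l * (Real.sqrt (s ^ 2 + 1) - s)) / Real.sqrt (s ^ 2 + 1) := by
  intro s hs l hl
  apply ofReal_injective
  rw [ofReal_integral_J0_sqrt_mul_exp s hl,
    laplace_transform_identity_general (r := √(s ^ 2 + 1)) hs
      (Real.sqrt_pos.2 (by positivity)) (mod_cast Real.sq_sqrt (by positivity))]
  push_cast
  rfl
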